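/- Let s, t be nonzero real numbers with s² + 4t ≥ 0 and assume {k}_{s,t} ≠ 0 for all 1 ≤ k ≤ d+1. Then for every integer d ≥ 1 and every n ≥ 1, {n+d \choose d+1}_{s,t} = Σ_{k=1}^{n} (φ'_{s,t})^{(d+1)(n−k)} · φ_{s,t}^{k−1} · {k+d−1 \choose d}_{s,t}. -/

import Mathlib

/-- Generalized Fibonacci polynomials/numbers: `{0} = 0`, `{1} = 1`,
`{n+2} = s·{n+1} + t·{n}`. -/
noncomputable def gfib (s t : ℝ) : ℕ → ℝ
  | 0 => 0
  | 1 => 1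
  | n + 2 => s * gfib s t (n + 1) + t * gfib s t n

/-- Generalized fibotorial `{n}! = {1}·{2}⋯{n}`, with `{0}! = 1`. -/
noncomputable def gfibFact (s t : ℝ) (n : ℕ) : ℝ :=
  ∏ k ∈ Finset.range n, gfib s t (k + 1)

/-- Generalized fibonomial coefficient `{n choose k} = {n}!/({k}!·{n−k}!)`. -/
noncomputable def gfibBinom (s t : ℝ) (n k : ℕ) : ℝ :=
  gfibFact s t n / (gfibFact s t k * gfibFact s t (n - k))

/-- `φ_{s,t} = (s + √(s²+4t))/2`. -/
noncomputable def phiST (s t : ℝ) : ℝ := (s + Real.sqrt (s ^ 2 + 4 * t)) / 2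

/-- `φ'_{s,t} = (s − √(s²+4t))/2`. -/
noncomputable def phiST' (s t : ℝ) : ℝ := (s - Real.sqrt (s ^ 2 + 4 * t)) / 2

/-- Generalized triangular numbers `{n+1 choose 2} = {n}·{n+1}/{2}`. -/
noncomputable def gtri (s t : ℝ) (n : ℕ) : ℝ :=
  gfib s t n * gfib s t (n + 1) / gfib s t 2

/-- Generalized tetrahedral numbers
`{n+2 choose 3} = {n}·{n+1}·{n+2}/({1}·{2}·{3})`. -/
noncomputable def gtet (s t : ℝ) (n : ℕ) : ℝ :=
  gfib s t n * gfib s t (n + 1) * gfib s t (n + 2) /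
    (gfib s t 1 * gfib s t 2 * gfib s t 3)

/-!
The roots `a`, `b` of `x² = s x + t` satisfy `{m + n} = b ^ m {n} + a ^ n {m}`. Multiplying by the
common factor `{n + d choose d} / {d + 1}` turns this, for `m = d + 1`, into the Pascal rule
`{n + d + 1 choose d + 1} = b ^ (d + 1) {n + d choose d + 1} + a ^ n {n + d choose d}`, and
unrolling it in `n` gives the sum. This argument works for `a`, `b` in any commutative `ℝ`-algebra,
in particular for complex roots.

When `s ^ 2 + 4 * t ≥ 0` and `s ≠ 0`, the number `{n + 1}` has the sign of `s ^ n`, so it is nonzero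
and no denominator vanishes.
-/

section Roots

variable {R : Type*} [CommRing R] [Algebra ℝ R] {s t : ℝ} {a b : R}

theorem algebraMap_gfib_succ (hadd : a + b = algebraMap ℝ R s) (hmul : a * b = -algebraMap ℝ R t)
    (n : ℕ) :
    algebraMap ℝ R (gfib s t (n + 1)) = b * algebraMap ℝ R (gfib s t n) + a ^ n := by
  induction n with
  | zero => simp [gfib]
  | succ n ih =>
    rw [gfib, map_add, map_mul, map_mul, ← hadd]
    linear_combination a * ih + algebraMap ℝ R (gfib s t n) * hmul

theorem algebraMap_gfib_add (hadd : a + b = algebraMap ℝ R s) (hmul : a * b = -algebraMap ℝ R t)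
    (m n : ℕ) :
    algebraMap ℝ R (gfib s t (m + n)) =
      b ^ m * algebraMap ℝ R (gfib s t n) + a ^ n * algebraMap ℝ R (gfib s t m) := by
  induction m with
  | zero => simp [gfib]
  | succ m ih =>
    rw [Nat.add_right_comm, algebraMap_gfib_succ hadd hmul, algebraMap_gfib_succ hadd hmul m, ih]
    ring

end Roots

section Fibonomial

variable {s t : ℝ}

theorem gfibFact_succ (n : ℕ) : gfibFact s t (n + 1) = gfibFact s t n * gfib s t (n + 1) :=
  Finset.prod_range_succ _ n

theorem gfibBinom_self {n : ℕ} (h : ∀ k, 1 ≤ k → k ≤ n → gfib s t k ≠ 0) :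
    gfibBinom s t n n = 1 := by
  have hfact : gfibFact s t n ≠ 0 :=
    Finset.prod_ne_zero_iff.mpr fun k hk => h (k + 1) k.succ_pos (Finset.mem_range.mp hk)
  have hzero : gfibFact s t 0 = 1 := Finset.prod_range_zero _
  rw [gfibBinom, Nat.sub_self, hzero, mul_one, div_self hfact]

theorem gfibBinom_succ_succ (n k : ℕ) :
    gfibBinom s t (n + 1) (k + 1) = gfibBinom s t n k / gfib s t (k + 1) * gfib s t (n + 1) := by
  rw [gfibBinom, gfibBinom, Nat.add_sub_add_right, gfibFact_succ, gfibFact_succ]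
  ring

theorem gfibBinom_add_succ {n : ℕ} (k : ℕ) (hn : gfib s t (n + 1) ≠ 0) :
    gfibBinom s t (n + 1 + k) (k + 1) =
      gfibBinom s t (n + 1 + k) k / gfib s t (k + 1) * gfib s t (n + 1) := by
  have hsub : n + 1 + k - (k + 1) = n := by omega
  rw [gfibBinom, gfibBinom, hsub, Nat.add_sub_cancel, gfibFact_succ, gfibFact_succ]
  field_simp

variable {R : Type*} [CommRing R] [Algebra ℝ R] {a b : R}

theorem algebraMap_gfibBinom_pascal (hadd : a + b = algebraMap ℝ R s)
    (hmul : a * b = -algebraMap ℝ R t) {d n : ℕ} (hd : gfib s t (d + 1) ≠ 0)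
    (hn : gfib s t n ≠ 0) :
    algebraMap ℝ R (gfibBinom s t (n + 1 + d) (d + 1)) =
      b ^ (d + 1) * algebraMap ℝ R (gfibBinom s t (n + d) (d + 1)) +
        a ^ n * algebraMap ℝ R (gfibBinom s t (n + d) d) := by
  obtain ⟨m, rfl⟩ : ∃ m, n = m + 1 :=
    Nat.exists_eq_succ_of_ne_zero (by rintro rfl; exact hn rfl)
  have haddition := algebraMap_gfib_add hadd hmul (d + 1) (m + 1)
  have hindex : d + 1 + (m + 1) = m + 1 + d + 1 := by ring
  rw [hindex] at haddition
  set c := algebraMap ℝ R (gfibBinom s t (m + 1 + d) d / gfib s t (d + 1))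
  have hcancel : algebraMap ℝ R (gfibBinom s t (m + 1 + d) d) =
      c * algebraMap ℝ R (gfib s t (d + 1)) := by
    rw [← map_mul, div_mul_cancel₀ _ hd]
  rw [Nat.add_right_comm (m + 1) 1 d, gfibBinom_succ_succ, gfibBinom_add_succ d hn,
    map_mul, map_mul, hcancel]
  linear_combination c * haddition

end Fibonomial

section RealRoots

variable {s t : ℝ}

theorem pow_mul_gfib_succ_pos (hs : s ≠ 0) (hdisc : 0 ≤ s ^ 2 + 4 * t) (n : ℕ) :
    0 < s ^ n * gfib s t (n + 1) := by
  have hsq : 0 < s ^ 2 := by positivity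
  -- For `s > 0` the added bound is `{n + 2} / {n + 1} ≥ s / 2`; `t ≥ -s ^ 2 / 4` propagates it.
  suffices h : 0 < s ^ n * gfib s t (n + 1) ∧
      s ^ 2 / 2 * (s ^ n * gfib s t (n + 1)) ≤ s ^ (n + 1) * gfib s t (n + 2) from h.1
  induction n with
  | zero =>
    simp only [pow_zero, zero_add, gfib]
    constructor <;> nlinarith
  | succ n ih =>
    obtain ⟨hpos, hgrowth⟩ := ih
    have hrec : s ^ (n + 2) * gfib s t (n + 3) =
        s ^ 2 * (s ^ (n + 1) * gfib s t (n + 2)) + t * s ^ 2 * (s ^ n * gfib s t (n + 1)) := by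
      rw [gfib]; ring
    have hpos' : 0 < s ^ (n + 1) * gfib s t (n + 2) := lt_of_lt_of_le (by positivity) hgrowth
    have hdisc' : 0 ≤ (s ^ 2 + 4 * t) * (s ^ 2 * (s ^ n * gfib s t (n + 1))) := by positivity
    refine ⟨hpos', ?_⟩
    rw [hrec]
    linear_combination s ^ 2 / 2 * hgrowth + hdisc' / 4

theorem gfib_ne_zero (hs : s ≠ 0) (hdisc : 0 ≤ s ^ 2 + 4 * t) {n : ℕ} (hn : 1 ≤ n) :
    gfib s t n ≠ 0 := by
  obtain ⟨m, rfl⟩ := Nat.exists_eq_add_of_le' hn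
  exact right_ne_zero_of_mul (pow_mul_gfib_succ_pos hs hdisc m).ne'

theorem phiST_add_phiST' (s t : ℝ) : phiST s t + phiST' s t = s := by
  rw [phiST, phiST']; ring

theorem phiST_mul_phiST' (hdisc : 0 ≤ s ^ 2 + 4 * t) : phiST s t * phiST' s t = -t := by
  rw [phiST, phiST']
  linear_combination -(Real.sq_sqrt hdisc) / 4

end RealRoots

theorem stmt1_general {R : Type*} [CommRing R] [Algebra ℝ R] {s t : ℝ} {a b : R}
    (hadd : a + b = algebraMap ℝ R s) (hmul : a * b = -algebraMap ℝ R t) {d n : ℕ}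
    (hd : ∀ k, 1 ≤ k → k ≤ d + 1 → gfib s t k ≠ 0) (hn : 1 ≤ n)
    (hlt : ∀ k, 1 ≤ k → k < n → gfib s t k ≠ 0) :
    algebraMap ℝ R (gfibBinom s t (n + d) (d + 1)) =
      ∑ k ∈ Finset.Icc 1 n,
        b ^ ((d + 1) * (n - k)) * a ^ (k - 1) *
          algebraMap ℝ R (gfibBinom s t (k + d - 1) d) := by
  induction n, hn using Nat.le_induction with
  | base =>
    have hd' : ∀ k, 1 ≤ k → k ≤ d → gfib s t k ≠ 0 := fun k hk hkd => hd k hk (by omega)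
    simp [add_comm 1 d, gfibBinom_self hd, gfibBinom_self hd']
  | succ n hn ih =>
    have hshift : ∀ k ∈ Finset.Icc 1 n,
        b ^ ((d + 1) * (n + 1 - k)) = b ^ (d + 1) * b ^ ((d + 1) * (n - k)) := fun k hk => by
      rw [Nat.sub_add_comm (Finset.mem_Icc.mp hk).2, mul_add_one, pow_add, mul_comm]
    rw [algebraMap_gfibBinom_pascal hadd hmul (hd (d + 1) d.succ_pos le_rfl)
        (hlt n hn n.lt_succ_self),
      ih fun k hk hkn => hlt k hk (hkn.trans n.lt_succ_self),
      Finset.sum_Icc_succ_top (by omega), Finset.mul_sum]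
    congr 1
    · exact Finset.sum_congr rfl fun k hk => by rw [hshift k hk]; ring
    · simp [Nat.add_right_comm n 1 d]

theorem stmt1 (s t : ℝ) (hs : s ≠ 0) (ht : t ≠ 0) (hdisc : s ^ 2 + 4 * t ≥ 0)
    (d : ℕ) (hd : 1 ≤ d) (hnz : ∀ k : ℕ, 1 ≤ k → k ≤ d + 1 → gfib s t k ≠ 0)
    (n : ℕ) (hn : 1 ≤ n) :
    gfibBinom s t (n + d) (d + 1) =
      ∑ k ∈ Finset.Icc 1 n,
        phiST' s t ^ ((d + 1) * (n - k)) * phiST s t ^ (k - 1) *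
          gfibBinom s t (k + d - 1) d := by
  exact stmt1_general (phiST_add_phiST' s t) (phiST_mul_phiST' hdisc) hnz hn
    fun k hk _ => gfib_ne_zero hs hdisc hk
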